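/- arXiv:2410.15493 — 2 statements merged into one kernel-verified Lean document; each statement's English description precedes it below -/
import Mathlib

section
/- Let 4π ≤ β² < 6π, κ = 10⁻³(6π − β²), β̄ = β²/(4π) + κ, let η ∈ (β̄/2 − 1, 0), ν ∈ (β²/(2π) − 2, 1], and set γ = 3 − β²/(2π) − (1−ν)η. Then there exists a constant C (depending only on β, η, ν) with the following property: for every T ∈ (0,1], every M ≥ 0, every measurable θ : (0,T] × 𝕋² → ℝ with weighted Hölder seminorm at most M, and all measurable kernels K, J : (0,∞) × 𝕋² → ℝ satisfying |K(t,x)| ≤ (t^{1/2} + d(x,0))^{−2} and |J(t,x)| ≤ (t^{1/2} + d(x,0))^{−β²/(2π)} for all (t,x) ∈ (0,∞) × 𝕋², one has sup over 0 < t ≤ T and x ∈ 𝕋² of t^{(1−η)/2} |R(θ)(t,x)| ≤ C T^{γ/2} M^ν. -/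
/-!
The sine is bounded by `|sin u| ≤ |u| ^ ν` for `0 ≤ ν ≤ 1`, so the Hölder seminorm of `θ` gains a
factor `M ^ ν s ^ (-ν (1 - η) / 2) (ρ + d(x, y)) ^ ν` with `ρ = (t - s) ^ (1/2)`. Write
`a = β² / (2π) ∈ [2, 3)`.

The kernels and this gain leave `(ρ + d(x, y)) ^ (-p)` with `p = 2 + a - ν > 2`. As the distance is
the maximum of the two coordinate distances, this is at most a product of one-dimensional functions
with exponent `p / 2 > 1`, and its integral over the torus is `O(ρ ^ (2 - p))`
(`integral_circle_le`, `integral_torus_le`).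

What remains is the Beta-type integral `∫₀ᵗ (t - s) ^ (-b) s ^ (-c) ds` with `b = (a - ν) / 2` and
`c = ν (1 - η) / 2`. Both exponents are less than `1`, because `ν > a - 2` and `η > -1/2`. It is
bounded by a multiple of `t ^ (1 - b - c)`, after splitting `(0, t)` at `t / 2`
(`rpow_mul_rpow_le`, `integral_time_majorant`). Finally `(1 - η) / 2 + 1 - b - c = γ / 2`, and
`γ > 0` allows `t` to be replaced by `T`.
-/

open MeasureTheory Real

/-- The flat two-dimensional torus `(ℝ/ℤ)²`. -/
noncomputable abbrev Torus2 := AddCircle (1 : ℝ) × AddCircle (1 : ℝ)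

/-- `θ` has weighted Hölder seminorm at most `M` on `(0,T] × 𝕋²` (with weight exponent `η`):
`|θ(t,x) − θ(s,y)| ≤ M s^{−(1−η)/2} (|t−s|^{1/2} + d(x,y))` for all `0 < s ≤ t ≤ T`. -/
def WeightedHolderLE (T η M : ℝ) (θ : ℝ × Torus2 → ℝ) : Prop :=
  ∀ s t : ℝ, 0 < s → s ≤ t → t ≤ T → ∀ x y : Torus2,
    |θ (t, x) - θ (s, y)| ≤ M * s ^ (-(1 - η)/2) * (|t - s| ^ ((1 : ℝ)/2) + dist x y)

/-- The resonant operator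
`R(θ)(t,x) = −(β/2) ∫₀ᵗ ∫_{𝕋²} K(t−s, x−y) J(t−s, x−y) sin(β(θ(t,x) − θ(s,y))) dy ds`. -/
noncomputable def resonantOp (β : ℝ) (K J : ℝ × Torus2 → ℝ) (θ : ℝ × Torus2 → ℝ)
    (t : ℝ) (x : Torus2) : ℝ :=
  -(β/2) * ∫ s in Set.Ioo (0 : ℝ) t, ∫ y : Torus2,
    K (t - s, x - y) * J (t - s, x - y) * Real.sin (β * (θ (t, x) - θ (s, y)))

/-! ### Integration in space -/

lemma integral_shift_rpow_le {q ρ : ℝ} (hq : 1 < q) (hρ : 0 < ρ) :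
    ∫ x in (0 : ℝ)..(1 / 2), (ρ + x) ^ (-q) ≤ ρ ^ (1 - q) / (q - 1) := by
  rw [intervalIntegral.integral_comp_add_left (fun x : ℝ => x ^ (-q)) ρ]
  rw [integral_rpow]
  · have h1 : 0 ≤ (ρ + 1 / 2) ^ (-q + 1) := by positivity
    have h2 : -q + 1 = -(q - 1) := by ring
    have h3 : 1 - q = -(q - 1) := by ring
    rw [h2] at h1 ⊢
    rw [h3, add_zero, div_neg, ← neg_div]
    have : 0 < q - 1 := by linarith
    gcongr
    linarith
  · right
    refine ⟨by linarith, ?_⟩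
    rw [Set.uIcc_of_le (by linarith)]
    intro h
    linarith [h.1]

lemma continuous_shift_norm_rpow {E : Type*} [SeminormedAddCommGroup E] {q ρ : ℝ} (hρ : 0 < ρ) :
    Continuous fun y : E => (ρ + ‖y‖) ^ (-q) :=
  (continuous_const.add continuous_norm).rpow_const fun y =>
    Or.inl (ne_of_gt (add_pos_of_pos_of_nonneg hρ (norm_nonneg y)))

/-- On the circle, `∫ (ρ + |y|) ^ (-q) dy = O(ρ ^ (1 - q))` for `q > 1`. -/
lemma integral_circle_le {q ρ : ℝ} (hq : 1 < q) (hρ : 0 < ρ) :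
    ∫ y : AddCircle (1 : ℝ), (ρ + ‖y‖) ^ (-q) ≤ 2 * (ρ ^ (1 - q) / (q - 1)) := by
  rw [← AddCircle.intervalIntegral_preimage (1 : ℝ) (-(1 / 2))]
  have e : (-(1 / 2) : ℝ) + 1 = 1 / 2 := by norm_num
  rw [e]
  have h1 : ∫ x in (-(1 / 2) : ℝ)..(1 / 2), (ρ + ‖(x : AddCircle (1 : ℝ))‖) ^ (-q)
      = ∫ x in (-(1 / 2) : ℝ)..(1 / 2), (ρ + |x|) ^ (-q) := by
    apply intervalIntegral.integral_congr
    intro x hx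
    rw [Set.uIcc_of_le (by norm_num)] at hx
    have : ‖(x : AddCircle (1 : ℝ))‖ = |x| := by
      refine (AddCircle.norm_coe_eq_abs_iff (1 : ℝ) one_ne_zero).2 ?_
      rw [abs_one]
      exact abs_le.2 ⟨hx.1, hx.2⟩
    simp only [this]
  have hc : Continuous fun x : ℝ => (ρ + |x|) ^ (-q) := continuous_shift_norm_rpow (E := ℝ) hρ
  rw [h1, ← intervalIntegral.integral_add_adjacent_intervals (b := 0)
    (hc.intervalIntegrable _ _) (hc.intervalIntegrable _ _)]
  have h2 : ∫ x in (0 : ℝ)..(1 / 2), (ρ + |x|) ^ (-q) = ∫ x in (0 : ℝ)..(1 / 2), (ρ + x) ^ (-q) := by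
    apply intervalIntegral.integral_congr
    intro x hx
    rw [Set.uIcc_of_le (by norm_num)] at hx
    simp only [abs_of_nonneg hx.1]
  have h3 : ∫ x in (-(1 / 2) : ℝ)..0, (ρ + |x|) ^ (-q)
      = ∫ x in (0 : ℝ)..(1 / 2), (ρ + |x|) ^ (-q) := by
    have := intervalIntegral.integral_comp_neg (a := 0) (b := 1 / 2)
      (fun x : ℝ => (ρ + |x|) ^ (-q))
    simp only [abs_neg, neg_zero] at this
    exact this.symm
  rw [h3, h2]
  linarith [integral_shift_rpow_le hq hρ]

/-- On the two-dimensional torus, `∫ (ρ + d(x, y)) ^ (-p) dy = O(ρ ^ (2 - p))` for `p > 2`. -/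
lemma integral_torus_le {p ρ : ℝ} (hp : 2 < p) (hρ : 0 < ρ) (x : Torus2) :
    ∫ y : Torus2, (ρ + ‖x - y‖) ^ (-p) ≤ (2 / (p / 2 - 1)) ^ 2 * ρ ^ (2 - p) := by
  have hq : 1 < p / 2 := by linarith
  let h : AddCircle (1 : ℝ) → ℝ := fun y => (ρ + ‖y‖) ^ (-(p / 2))
  have hh0 : ∀ y, 0 ≤ h y := fun y => by positivity
  have hcont : Continuous h := continuous_shift_norm_rpow hρ
  have hI : ∫ y, h y ≤ 2 * (ρ ^ (1 - p / 2) / (p / 2 - 1)) := integral_circle_le hq hρ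
  -- The norm on the product is the maximum, so each half of the exponent may be given to one
  -- coordinate, and the integral factorizes.
  have hle : ∀ y : Torus2, (ρ + ‖x - y‖) ^ (-p) ≤ h (x.1 - y.1) * h (x.2 - y.2) := by
    intro y
    have e : -p = -(p / 2) + -(p / 2) := by ring
    rw [e, Real.rpow_add (by positivity)]
    have a1 : ‖x.1 - y.1‖ ≤ ‖x - y‖ := norm_fst_le (x - y)
    have a2 : ‖x.2 - y.2‖ ≤ ‖x - y‖ := norm_snd_le (x - y)
    apply mul_le_mul _ _ (by positivity) (by positivity)
    · exact Real.rpow_le_rpow_of_nonpos (by positivity) (by linarith) (by linarith)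
    · exact Real.rpow_le_rpow_of_nonpos (by positivity) (by linarith) (by linarith)
  have hc1 : Continuous fun y : Torus2 => (ρ + ‖x - y‖) ^ (-p) :=
    (continuous_shift_norm_rpow hρ).comp (continuous_const.sub continuous_id)
  have hc2 : Continuous fun y : Torus2 => h (x.1 - y.1) * h (x.2 - y.2) := by fun_prop
  calc ∫ y : Torus2, (ρ + ‖x - y‖) ^ (-p)
      ≤ ∫ y : Torus2, h (x.1 - y.1) * h (x.2 - y.2) :=
        integral_mono (hc1.integrable_of_hasCompactSupport (HasCompactSupport.of_compactSpace _))
          (hc2.integrable_of_hasCompactSupport (HasCompactSupport.of_compactSpace _)) hle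
    _ = (∫ y, h (x.1 - y)) * ∫ y, h (x.2 - y) :=
        integral_prod_mul (fun y => h (x.1 - y)) (fun y => h (x.2 - y))
    _ = (∫ y, h y) ^ 2 := by
        rw [integral_sub_left_eq_self h volume x.1, integral_sub_left_eq_self h volume x.2, sq]
    _ ≤ (2 * (ρ ^ (1 - p / 2) / (p / 2 - 1))) ^ 2 := by
        have : 0 ≤ ∫ y, h y := integral_nonneg hh0
        gcongr
    _ = (2 / (p / 2 - 1)) ^ 2 * ρ ^ (2 - p) := by
        have e : 2 - p = (1 - p / 2) + (1 - p / 2) := by ring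
        rw [e, Real.rpow_add hρ]
        ring

/-! ### Integration in time -/

/-- Whichever of `s`, `t - s` is at least `t / 2` has its negative power bounded by that
of `t / 2`. -/
lemma rpow_mul_rpow_le {b c t s : ℝ} (hb : 0 ≤ b) (hc : 0 ≤ c) (hs : s ∈ Set.Ioo 0 t) :
    (t - s) ^ (-b) * s ^ (-c) ≤ (t / 2) ^ (-b) * s ^ (-c) + (t / 2) ^ (-c) * (t - s) ^ (-b) := by
  obtain ⟨h0, h1⟩ := hs
  have h2 : 0 < t - s := by linarith
  have h3 : 0 < t / 2 := by linarith
  rcases le_total s (t / 2) with h | h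
  · have : (t - s) ^ (-b) ≤ (t / 2) ^ (-b) :=
      Real.rpow_le_rpow_of_nonpos h3 (by linarith) (by linarith)
    have h4 : 0 ≤ (t / 2) ^ (-c) * (t - s) ^ (-b) := by positivity
    have h5 : (t - s) ^ (-b) * s ^ (-c) ≤ (t / 2) ^ (-b) * s ^ (-c) := by gcongr
    linarith
  · have : s ^ (-c) ≤ (t / 2) ^ (-c) :=
      Real.rpow_le_rpow_of_nonpos h3 (by linarith) (by linarith)
    have h4 : 0 ≤ (t / 2) ^ (-b) * s ^ (-c) := by positivity
    have h5 : (t - s) ^ (-b) * s ^ (-c) ≤ (t - s) ^ (-b) * (t / 2) ^ (-c) := by gcongr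
    linarith

/-- The majorant from `rpow_mul_rpow_le` is integrable on `(0, t)`, with the integral scaling
like `t ^ (1 - b - c)`. -/
lemma integral_time_majorant {b c t : ℝ} (hb : b < 1) (hc : c < 1) (ht : 0 < t) :
    IntegrableOn (fun s => (t / 2) ^ (-b) * s ^ (-c) + (t / 2) ^ (-c) * (t - s) ^ (-b))
      (Set.Ioo 0 t) ∧
    ∫ s in Set.Ioo 0 t, ((t / 2) ^ (-b) * s ^ (-c) + (t / 2) ^ (-c) * (t - s) ^ (-b))
      = (2 ^ b / (1 - c) + 2 ^ c / (1 - b)) * t ^ (1 - b - c) := by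
  have i1 : IntervalIntegrable (fun s : ℝ => s ^ (-c)) volume 0 t :=
    intervalIntegral.intervalIntegrable_rpow' (by linarith)
  have i2 : IntervalIntegrable (fun s : ℝ => (t - s) ^ (-b)) volume 0 t := by
    have := (intervalIntegral.intervalIntegrable_rpow' (a := 0) (b := t) (r := -b)
      (by linarith)).comp_sub_left t
    simpa using this.symm
  have j1 := i1.const_mul ((t / 2) ^ (-b))
  have j2 := i2.const_mul ((t / 2) ^ (-c))
  refine ⟨((intervalIntegrable_iff_integrableOn_Ioo_of_le ht.le).1 (j1.add j2)), ?_⟩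
  rw [← integral_Ioc_eq_integral_Ioo, ← intervalIntegral.integral_of_le ht.le,
    intervalIntegral.integral_add j1 j2, intervalIntegral.integral_const_mul,
    intervalIntegral.integral_const_mul,
    intervalIntegral.integral_comp_sub_left (fun s : ℝ => s ^ (-b)) t, sub_self, sub_zero,
    integral_rpow (Or.inl (by linarith)), integral_rpow (Or.inl (by linarith)),
    Real.zero_rpow (by linarith), Real.zero_rpow (by linarith),
    Real.div_rpow ht.le (by norm_num), Real.div_rpow ht.le (by norm_num),
    Real.rpow_neg (x := 2) (by norm_num), Real.rpow_neg (x := 2) (by norm_num)]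
  have e1 : t ^ (1 - b - c) = t ^ (-b) * t ^ (-c + 1) := by
    rw [← Real.rpow_add ht]; ring_nf
  have e2 : t ^ (1 - b - c) = t ^ (-c) * t ^ (-b + 1) := by
    rw [← Real.rpow_add ht]; ring_nf
  rw [add_mul, e1]
  nth_rewrite 2 [← e1]
  rw [e2]
  have : 1 - c ≠ 0 := by linarith
  have : 1 - b ≠ 0 := by linarith
  have : -c + 1 ≠ 0 := by linarith
  have : -b + 1 ≠ 0 := by linarith
  have k1 : -c + 1 = 1 - c := by ring
  have k2 : -b + 1 = 1 - b := by ring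
  simp only [k1, k2]
  field_simp
  ring

/-! ### The estimate of the resonant operator -/

/-- Interpolation between `|sin u| ≤ 1` and `|sin u| ≤ |u|`. -/
lemma abs_sin_le_rpow {u ν : ℝ} (h0 : 0 ≤ ν) (h1 : ν ≤ 1) : |Real.sin u| ≤ |u| ^ ν := by
  rcases le_total 1 |u| with h | h
  · exact (Real.abs_sin_le_one u).trans (Real.one_le_rpow h h0)
  · exact (Real.abs_sin_le_abs).trans (Real.self_le_rpow_of_le_one (abs_nonneg u) h h1)

/-- The pointwise bound on the integrand of the resonant operator, with `ρ = (t - s) ^ (1/2)`. -/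
lemma integrand_bound {β η ν T M a : ℝ} (hν0 : 0 ≤ ν) (hν1 : ν ≤ 1) (hM : 0 ≤ M)
    {θ : ℝ × Torus2 → ℝ} (hθ : WeightedHolderLE T η M θ) {K J : ℝ × Torus2 → ℝ}
    (hK : ∀ t : ℝ, 0 < t → ∀ x : Torus2,
        |K (t, x)| ≤ (t ^ ((1 : ℝ)/2) + dist x 0) ^ (-2 : ℝ))
    (hJ : ∀ t : ℝ, 0 < t → ∀ x : Torus2,
        |J (t, x)| ≤ (t ^ ((1 : ℝ)/2) + dist x 0) ^ (-a))
    {s t : ℝ} (hs : s ∈ Set.Ioo 0 t) (ht : t ≤ T) (x y : Torus2) :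
    |K (t - s, x - y) * J (t - s, x - y) * Real.sin (β * (θ (t, x) - θ (s, y)))| ≤
      |β| ^ ν * M ^ ν * s ^ (-(ν * (1 - η) / 2)) *
        ((t - s) ^ ((1 : ℝ)/2) + ‖x - y‖) ^ (-(2 + a - ν)) := by
  obtain ⟨h0, h1⟩ := hs
  have hr : 0 < t - s := by linarith
  have k := hK (t - s) hr (x - y)
  have j := hJ (t - s) hr (x - y)
  have hh := hθ s t h0 h1.le ht x y
  rw [dist_zero_right] at k j
  rw [abs_of_pos hr, dist_eq_norm] at hh
  set ρ := (t - s) ^ ((1 : ℝ)/2) + ‖x - y‖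
  have hρ : 0 < ρ := by positivity
  have hsin : |Real.sin (β * (θ (t, x) - θ (s, y)))| ≤
      |β| ^ ν * (M ^ ν * s ^ (-(ν * (1 - η) / 2)) * ρ ^ ν) := by
    refine (abs_sin_le_rpow hν0 hν1).trans ?_
    rw [abs_mul, Real.mul_rpow (abs_nonneg _) (abs_nonneg _)]
    gcongr
    refine (Real.rpow_le_rpow (abs_nonneg _) hh hν0).trans (le_of_eq ?_)
    rw [Real.mul_rpow (by positivity) hρ.le, Real.mul_rpow hM (by positivity),
      ← Real.rpow_mul h0.le]
    congr 3
    ring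
  have e : -(2 + a - ν) = -2 + -a + ν := by ring
  rw [abs_mul, abs_mul, e, Real.rpow_add hρ, Real.rpow_add hρ]
  calc _ ≤ ρ ^ (-2 : ℝ) * ρ ^ (-a) * (|β| ^ ν * (M ^ ν * s ^ (-(ν * (1 - η) / 2)) * ρ ^ ν)) := by
        gcongr
    _ = _ := by ring

/-- Estimate of the resonant operator: for `4π ≤ β² < 6π`, suitable parameters
`κ, β̄, η, ν, γ`, there is a constant `C` such that for all `T ∈ (0,1]`, all `M ≥ 0`,
all measurable `θ` with weighted Hölder seminorm at most `M`, and all measurable kernels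
`K, J` with the stated pointwise bounds,
`sup_{0 < t ≤ T, x} t^{(1−η)/2} |R(θ)(t,x)| ≤ C T^{γ/2} M^ν`. -/
theorem resonant_operator_estimate (β κ βbar η ν γ : ℝ)
    (hβl : 4 * π ≤ β ^ 2) (hβu : β ^ 2 < 6 * π)
    (hκ : κ = (10 : ℝ) ^ (-3 : ℤ) * (6 * π - β ^ 2))
    (hβbar : βbar = β ^ 2 / (4 * π) + κ)
    (hη : η ∈ Set.Ioo (βbar / 2 - 1) 0)
    (hν : ν ∈ Set.Ioc (β ^ 2 / (2 * π) - 2) 1)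
    (hγ : γ = 3 - β ^ 2 / (2 * π) - (1 - ν) * η) :
    ∃ C : ℝ, ∀ T ∈ Set.Ioc (0 : ℝ) 1, ∀ M : ℝ, 0 ≤ M →
      ∀ θ : ℝ × Torus2 → ℝ, Measurable θ → WeightedHolderLE T η M θ →
      ∀ K J : ℝ × Torus2 → ℝ, Measurable K → Measurable J →
      (∀ t : ℝ, 0 < t → ∀ x : Torus2,
        |K (t, x)| ≤ (t ^ ((1 : ℝ)/2) + dist x 0) ^ (-2 : ℝ)) →
      (∀ t : ℝ, 0 < t → ∀ x : Torus2,
        |J (t, x)| ≤ (t ^ ((1 : ℝ)/2) + dist x 0) ^ (-(β ^ 2 / (2 * π)))) →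
      ∀ t ∈ Set.Ioc (0 : ℝ) T, ∀ x : Torus2,
        t ^ ((1 - η)/2) * |resonantOp β K J θ t x| ≤ C * T ^ (γ/2) * M ^ ν := by
  obtain ⟨hν1, hν2⟩ := hν
  obtain ⟨hη1, hη2⟩ := hη
  have hπ := Real.pi_pos
  have ha2 : 2 ≤ β ^ 2 / (2 * π) := by
    rw [le_div_iff₀ (by positivity)]; linarith
  have ha3 : β ^ 2 / (2 * π) < 3 := by
    rw [div_lt_iff₀ (by positivity)]; linarith
  -- `β̄ ≥ 1`, so the lower bound on `η` gives `ν (1 - η) / 2 < 1`.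
  have hη3 : -(1 / 2) < η := by
    have h1 : 1 ≤ β ^ 2 / (4 * π) := by
      rw [le_div_iff₀ (by positivity)]; linarith
    have h2 : 0 ≤ κ := by
      rw [hκ]; exact mul_nonneg (by positivity) (by linarith)
    linarith
  set a := β ^ 2 / (2 * π)
  have hν0 : 0 < ν := by linarith
  set b := (a - ν) / 2 with hb
  set c := ν * (1 - η) / 2 with hc
  set D := (2 / ((2 + a - ν) / 2 - 1)) ^ 2 with hD
  set E := 2 ^ b / (1 - c) + 2 ^ c / (1 - b) with hE
  have hb0 : 0 ≤ b := by rw [hb]; linarith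
  have hb1 : b < 1 := by rw [hb]; linarith
  have hc0 : 0 ≤ c := by rw [hc]; exact div_nonneg (mul_nonneg hν0.le (by linarith)) (by norm_num)
  have hc1 : c < 1 := by rw [hc]; nlinarith
  have hD0 : 0 ≤ D := sq_nonneg _
  have hE0 : 0 ≤ E := by
    have h1 : 0 < 1 - b := by linarith
    have h2 : 0 < 1 - c := by linarith
    positivity
  have hγ0 : 0 ≤ γ := by
    rw [hγ]; nlinarith
  refine ⟨|β / 2| * (|β| ^ ν * D * E), ?_⟩
  intro T hT M hM θ _ hθ K J _ _ hK hJ t ht x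
  obtain ⟨ht0, htT⟩ := ht
  -- Bounding norms of integrals by an integrable majorant avoids showing that the integrands are
  -- integrable: a non-integrable one has integral `0`.
  have inner : ∀ s ∈ Set.Ioo 0 t, ‖∫ y : Torus2,
      K (t - s, x - y) * J (t - s, x - y) * Real.sin (β * (θ (t, x) - θ (s, y)))‖ ≤
      |β| ^ ν * M ^ ν * D * ((t - s) ^ (-b) * s ^ (-c)) := by
    intro s hs
    have hr : 0 < t - s := by linarith [hs.2]
    have hρ : 0 < (t - s) ^ ((1 : ℝ)/2) := by positivity
    have hs0 := hs.1
    have hcont : Continuous fun y : Torus2 =>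
        ((t - s) ^ ((1 : ℝ)/2) + ‖x - y‖) ^ (-(2 + a - ν)) :=
      (continuous_shift_norm_rpow hρ).comp (continuous_const.sub continuous_id)
    have hint := hcont.integrable_of_hasCompactSupport (μ := volume)
      (HasCompactSupport.of_compactSpace _)
    refine (norm_integral_le_of_norm_le
      (hint.const_mul (|β| ^ ν * M ^ ν * s ^ (-c)))
      (Filter.Eventually.of_forall fun y =>
        integrand_bound hν0.le hν2 hM hθ hK hJ hs htT x y)).trans ?_
    rw [integral_const_mul]
    have key := integral_torus_le (p := 2 + a - ν) (by linarith) hρ x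
    have e : ((t - s) ^ ((1 : ℝ)/2)) ^ (2 - (2 + a - ν)) = (t - s) ^ (-b) := by
      rw [← Real.rpow_mul hr.le]; congr 1; rw [hb]; ring
    rw [e] at key
    calc _ ≤ |β| ^ ν * M ^ ν * s ^ (-c) * (D * (t - s) ^ (-b)) := by gcongr
      _ = _ := by ring
  obtain ⟨hmi, hmv⟩ := integral_time_majorant hb1 hc1 ht0
  have outer : |∫ s in Set.Ioo (0 : ℝ) t, ∫ y : Torus2,
      K (t - s, x - y) * J (t - s, x - y) * Real.sin (β * (θ (t, x) - θ (s, y)))| ≤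
      |β| ^ ν * M ^ ν * D * (E * t ^ (1 - b - c)) := by
    rw [← hmv, ← integral_const_mul, ← Real.norm_eq_abs]
    refine norm_integral_le_of_norm_le (hmi.const_mul _) ?_
    refine (ae_restrict_iff' measurableSet_Ioo).2 (Filter.Eventually.of_forall fun s hs => ?_)
    exact (inner s hs).trans
      (mul_le_mul_of_nonneg_left (rpow_mul_rpow_le hb0 hc0 hs) (by positivity))
  have hpow : t ^ ((1 - η)/2) * t ^ (1 - b - c) = t ^ (γ/2) := by
    rw [← Real.rpow_add ht0]; congr 1; rw [hγ, hb, hc]; ring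
  have hmono : t ^ (γ/2) ≤ T ^ (γ/2) := Real.rpow_le_rpow ht0.le htT (by linarith)
  rw [resonantOp, abs_mul, abs_neg]
  calc _ ≤ t ^ ((1 - η)/2) * (|β / 2| * (|β| ^ ν * M ^ ν * D * (E * t ^ (1 - b - c)))) := by
        gcongr
    _ = |β / 2| * (|β| ^ ν * D * E) * (t ^ ((1 - η)/2) * t ^ (1 - b - c)) * M ^ ν := by ring
    _ ≤ _ := by
        rw [hpow]
        gcongr
end

section
/- Equip ℝ × ℝ² with the parabolic norm ‖(t,x)‖_𝔰 := |t|^{1/2} + |x|. Let α, γ ∈ (0,4) with α + γ > 4. Then there exists a constant C > 0 (depending only on α and γ) such that for all z, z̄ ∈ ℝ × ℝ² with z ≠ z̄, ∫_{ℝ×ℝ²} ‖z − w‖_𝔰^{−α} · ‖z̄ − w‖_𝔰^{−γ} dw ≤ C ‖z − z̄‖_𝔰^{4 − α − γ}. -/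
/-!
The parabolic scaling has homogeneous dimension 4: the ball `{‖w‖_𝔰 ≤ r}` has volume at most
`2π r⁴` (`volume_parabolicNorm_le`). Cutting into dyadic annuli and summing a geometric series,
`‖w‖_𝔰^{-β}` has integral `≲ R^{4-β}` over `{‖w‖_𝔰 ≤ R}` if `β < 4`, and over `{‖w‖_𝔰 > R}` if
`β > 4`; both cases come from `lintegral_indicator_rpow_le`, with ratio `1/2` and `2` respectively.

Write `r = ‖z - z̄‖_𝔰`, `a = ‖z - w‖_𝔰`, `b = ‖z̄ - w‖_𝔰`, so `r ≤ a + b`. If `a ≤ r/2` then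
`b ≥ r/2`, and the integrand is at most `(r/2)^{-γ} a^{-α}`; symmetrically if `b ≤ r/2`. If both
exceed `r/2`, the integrand is at most the power `-(α+γ)` of `min a b`, which is integrable at
infinity because `α + γ > 4`. Each of the four resulting integrals is `≲ r^{4-α-γ}`.
-/

open MeasureTheory

/-- The parabolic norm `‖(t,x)‖_𝔰 = |t|^{1/2} + |x|` on `ℝ × ℝ²`. -/
noncomputable def parabolicNorm (z : ℝ × EuclideanSpace ℝ (Fin 2)) : ℝ :=
  |z.1| ^ ((1 : ℝ)/2) + ‖z.2‖

lemma parabolicNorm_nonneg (z : ℝ × EuclideanSpace ℝ (Fin 2)) : 0 ≤ parabolicNorm z := by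
  unfold parabolicNorm; positivity

lemma parabolicNorm_pos {z : ℝ × EuclideanSpace ℝ (Fin 2)} (hz : z ≠ 0) :
    0 < parabolicNorm z := by
  unfold parabolicNorm
  by_cases h : z.1 = 0
  · have h2 : z.2 ≠ 0 := fun h2 => hz (Prod.ext h h2)
    have := norm_pos_iff.2 h2
    positivity
  · have := abs_pos.2 h
    positivity

lemma parabolicNorm_sub_le (z zb w : ℝ × EuclideanSpace ℝ (Fin 2)) :
    parabolicNorm (z - zb) ≤ parabolicNorm (z - w) + parabolicNorm (zb - w) := by
  unfold parabolicNorm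
  simp only [Prod.fst_sub, Prod.snd_sub]
  have h1 : |z.1 - zb.1| ≤ |z.1 - w.1| + |zb.1 - w.1| := by
    rw [abs_sub_comm zb.1 w.1]; exact abs_sub_le _ _ _
  have h2 : ‖z.2 - zb.2‖ ≤ ‖z.2 - w.2‖ + ‖zb.2 - w.2‖ := by
    rw [norm_sub_rev zb.2 w.2]; exact norm_sub_le_norm_sub_add_norm_sub _ _ _
  have h3 : |z.1 - zb.1| ^ ((1 : ℝ)/2) ≤ (|z.1 - w.1| + |zb.1 - w.1|) ^ ((1 : ℝ)/2) :=
    Real.rpow_le_rpow (abs_nonneg _) h1 (by norm_num)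
  have h4 := Real.rpow_add_le_add_rpow (abs_nonneg (z.1 - w.1)) (abs_nonneg (zb.1 - w.1))
    (p := (1 : ℝ)/2) (by norm_num) (by norm_num)
  linarith

lemma measurable_parabolicNorm : Measurable parabolicNorm := by
  unfold parabolicNorm; fun_prop

lemma volume_parabolicNorm_le {r : ℝ} (hr : 0 ≤ r) :
    volume {w : ℝ × EuclideanSpace ℝ (Fin 2) | parabolicNorm w ≤ r}
      ≤ ENNReal.ofReal (2 * Real.pi * r ^ 4) := by
  have hsub : {w : ℝ × EuclideanSpace ℝ (Fin 2) | parabolicNorm w ≤ r}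
      ⊆ Set.Icc (-r ^ 2) (r ^ 2) ×ˢ Metric.closedBall 0 r := by
    intro w hw
    have hw' : |w.1| ^ ((1 : ℝ)/2) + ‖w.2‖ ≤ r := hw
    have h0 : 0 ≤ |w.1| ^ ((1 : ℝ)/2) := by positivity
    refine ⟨?_, ?_⟩
    · have h1 : |w.1| ^ ((1 : ℝ)/2) ≤ r := by linarith [norm_nonneg w.2]
      rw [← Real.sqrt_eq_rpow] at h1
      have h2 := (Real.sqrt_le_left hr).1 h1
      exact abs_le.1 h2
    · rw [mem_closedBall_zero_iff]; linarith
  refine (measure_mono hsub).trans ?_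
  rw [Measure.volume_eq_prod, Measure.prod_prod, Real.volume_Icc,
    EuclideanSpace.volume_closedBall_fin_two, ← ENNReal.ofReal_pow hr]
  rw [show ENNReal.ofReal (2 * Real.pi * r ^ 4)
    = ENNReal.ofReal (r ^ 2 - -r ^ 2) * (ENNReal.ofReal (r ^ 2) * ENNReal.ofReal Real.pi) from ?_]
  rw [← ENNReal.ofReal_mul (by positivity), ← ENNReal.ofReal_mul (by nlinarith [sq_nonneg r])]
  congr 1; ring

/-- Constant in the dyadic bound on the integral of `‖w‖_𝔰^{-β}`, for annuli of ratio `q`. -/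
noncomputable def dyadicConst (β q : ℝ) : ℝ := 2 * Real.pi * 2 ^ β * (1 - q ^ (4 - β))⁻¹

lemma dyadicConst_pos {β q : ℝ} (hq1 : q ^ (4 - β) < 1) : 0 < dyadicConst β q := by
  have : 0 < 1 - q ^ (4 - β) := by linarith
  unfold dyadicConst; positivity

/-- A set covered, up to the origin, by the annuli `R q^k / 2 ≤ ‖w‖_𝔰 ≤ R q^k` carries at most
`C R^{4-β}` of the integral of `‖w‖_𝔰^{-β}`, as soon as the geometric series of ratio `q^{4-β}`
converges. -/
lemma lintegral_indicator_rpow_le {β q R : ℝ} (hβ : 0 < β) (hq : 0 < q)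
    (hq1 : q ^ (4 - β) < 1) (hR : 0 < R) (S : Set (ℝ × EuclideanSpace ℝ (Fin 2)))
    (hS : ∀ w ∈ S, parabolicNorm w = 0 ∨
      ∃ k : ℕ, R * q ^ k / 2 ≤ parabolicNorm w ∧ parabolicNorm w ≤ R * q ^ k) :
    ∫⁻ w, S.indicator (fun w => ENNReal.ofReal (parabolicNorm w ^ (-β))) w
      ≤ ENNReal.ofReal (dyadicConst β q * R ^ (4 - β)) := by
  have hmeas : ∀ k : ℕ, MeasurableSet
      {w : ℝ × EuclideanSpace ℝ (Fin 2) | parabolicNorm w ≤ R * q ^ k} := fun k =>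
    measurableSet_le measurable_parabolicNorm measurable_const
  calc ∫⁻ w, S.indicator (fun w => ENNReal.ofReal (parabolicNorm w ^ (-β))) w
      ≤ ∫⁻ w, ∑' k : ℕ, {w | parabolicNorm w ≤ R * q ^ k}.indicator
          (fun _ => ENNReal.ofReal ((R * q ^ k / 2) ^ (-β))) w := by
        refine lintegral_mono fun w => ?_
        by_cases hw : w ∈ S
        · rw [Set.indicator_of_mem hw]
          rcases hS w hw with h0 | ⟨k, hk1, hk2⟩
          · -- At the origin `0 ^ (-β)` is `0` by convention.
            simp [h0, Real.zero_rpow (neg_ne_zero.2 hβ.ne')]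
          · refine le_trans ?_ (ENNReal.le_tsum k)
            rw [Set.indicator_of_mem (by exact hk2)]
            exact ENNReal.ofReal_le_ofReal
              (Real.rpow_le_rpow_of_nonpos (by positivity) hk1 (by linarith))
        · simp [Set.indicator_of_notMem hw]
    _ = ∑' k : ℕ, ENNReal.ofReal ((R * q ^ k / 2) ^ (-β)) *
          volume {w : ℝ × EuclideanSpace ℝ (Fin 2) | parabolicNorm w ≤ R * q ^ k} := by
        rw [lintegral_tsum fun k => (measurable_const.indicator (hmeas k)).aemeasurable]
        simp only [lintegral_indicator_const (hmeas _)]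
    _ ≤ ∑' k : ℕ, ENNReal.ofReal
          (2 * Real.pi * 2 ^ β * R ^ (4 - β) * (q ^ (4 - β)) ^ k) := by
        refine ENNReal.tsum_le_tsum fun k => ?_
        refine (mul_le_mul_right (volume_parabolicNorm_le (by positivity)) _).trans ?_
        rw [← ENNReal.ofReal_mul (by positivity)]
        refine (congrArg ENNReal.ofReal ?_).le
        have hx : 0 < R * q ^ k := by positivity
        have e1 : (q ^ (4 - β)) ^ k = (q ^ k) ^ (4 - β) := by
          rw [← Real.rpow_natCast, ← Real.rpow_natCast, ← Real.rpow_mul hq.le,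
            ← Real.rpow_mul hq.le, mul_comm]
        have e2 : (R * q ^ k) ^ (4 - β) = (R * q ^ k) ^ 4 * (R * q ^ k) ^ (-β) := by
          rw [sub_eq_add_neg, Real.rpow_add hx]; norm_cast
        rw [e1, mul_assoc _ (R ^ (4 - β)), ← Real.mul_rpow hR.le (by positivity), e2,
          Real.div_rpow hx.le (by norm_num), Real.rpow_neg (x := 2) (by norm_num), div_inv_eq_mul]
        ring
    _ = ENNReal.ofReal (dyadicConst β q * R ^ (4 - β)) := by
        have hq0 : 0 ≤ q ^ (4 - β) := by positivity
        rw [← ENNReal.ofReal_tsum_of_nonneg (fun k => by positivity)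
          ((summable_geometric_of_lt_one hq0 hq1).mul_left _), tsum_mul_left,
          tsum_geometric_of_lt_one hq0 hq1]
        congr 1; unfold dyadicConst; ring

lemma lintegral_inner_le {β R : ℝ} (hβ : 0 < β) (hβ4 : β < 4) (hR : 0 < R) :
    ∫⁻ w, {w | parabolicNorm w ≤ R}.indicator
        (fun w => ENNReal.ofReal (parabolicNorm w ^ (-β))) w
      ≤ ENNReal.ofReal (dyadicConst β (1 / 2) * R ^ (4 - β)) := by
  refine lintegral_indicator_rpow_le hβ (by norm_num)
    (Real.rpow_lt_one (by norm_num) (by norm_num) (by linarith)) hR _ fun w hw => ?_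
  rcases (parabolicNorm_nonneg w).eq_or_lt with h | h
  · exact Or.inl h.symm
  · right
    obtain ⟨k, hk1, hk2⟩ := exists_nat_pow_near_of_lt_one (div_pos h hR)
      ((div_le_one hR).2 hw) (y := (1 : ℝ) / 2) (by norm_num) (by norm_num)
    rw [lt_div_iff₀ hR, pow_succ] at hk1
    rw [div_le_iff₀ hR] at hk2
    exact ⟨k, by linarith, by linarith⟩

lemma lintegral_outer_le {β R : ℝ} (hβ4 : 4 < β) (hR : 0 < R) :
    ∫⁻ w, {w | R < parabolicNorm w}.indicator
        (fun w => ENNReal.ofReal (parabolicNorm w ^ (-β))) w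
      ≤ ENNReal.ofReal (dyadicConst β 2 * (2 * R) ^ (4 - β)) := by
  refine lintegral_indicator_rpow_le (by linarith) (by norm_num)
    (Real.rpow_lt_one_of_one_lt_of_neg (by norm_num) (by linarith)) (by positivity) _
    fun w hw => Or.inr ?_
  obtain ⟨k, hk1, hk2⟩ := exists_nat_pow_near
    ((one_le_div hR).2 (le_of_lt hw)) (y := (2 : ℝ)) (by norm_num)
  rw [div_lt_iff₀ hR, pow_succ] at hk2
  rw [le_div_iff₀ hR] at hk1
  exact ⟨k, by linarith, by linarith⟩

/-- Pointwise bound on the integrand by four functions, each depending on only one of the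
distances `a`, `b`. -/
lemma ofReal_mul_rpow_le {α γ r : ℝ} (hα : 0 < α) (hγ : 0 < γ) (hr : 0 < r)
    (u v : ℝ × EuclideanSpace ℝ (Fin 2)) (huv : r ≤ parabolicNorm u + parabolicNorm v) :
    ENNReal.ofReal (parabolicNorm u ^ (-α) * parabolicNorm v ^ (-γ))
      ≤ ENNReal.ofReal ((r / 2) ^ (-γ)) * {w | parabolicNorm w ≤ r / 2}.indicator
            (fun w => ENNReal.ofReal (parabolicNorm w ^ (-α))) u
        + ENNReal.ofReal ((r / 2) ^ (-α)) * {w | parabolicNorm w ≤ r / 2}.indicator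
            (fun w => ENNReal.ofReal (parabolicNorm w ^ (-γ))) v
        + {w | r / 2 < parabolicNorm w}.indicator
            (fun w => ENNReal.ofReal (parabolicNorm w ^ (-(α + γ)))) u
        + {w | r / 2 < parabolicNorm w}.indicator
            (fun w => ENNReal.ofReal (parabolicNorm w ^ (-(α + γ)))) v := by
  have hu0 := parabolicNorm_nonneg u
  have hv0 := parabolicNorm_nonneg v
  by_cases hu : parabolicNorm u ≤ r / 2
  · refine le_trans ?_ (le_self_add.trans (le_self_add.trans le_self_add))
    rw [Set.indicator_of_mem (by exact hu), ← ENNReal.ofReal_mul (by positivity),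
      mul_comm ((r / 2) ^ (-γ))]
    refine ENNReal.ofReal_le_ofReal (mul_le_mul_of_nonneg_left ?_ (by positivity))
    exact Real.rpow_le_rpow_of_nonpos (by positivity) (by linarith) (by linarith)
  by_cases hv : parabolicNorm v ≤ r / 2
  · refine le_trans ?_ (le_add_self.trans (le_self_add.trans le_self_add))
    rw [Set.indicator_of_mem (by exact hv), ← ENNReal.ofReal_mul (by positivity)]
    refine ENNReal.ofReal_le_ofReal (mul_le_mul_of_nonneg_right ?_ (by positivity))
    exact Real.rpow_le_rpow_of_nonpos (by positivity) (by linarith) (by linarith)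
  push Not at hu hv
  have hup : 0 < parabolicNorm u := by linarith
  have hvp : 0 < parabolicNorm v := by linarith
  rcases le_total (parabolicNorm u) (parabolicNorm v) with h | h
  · refine le_trans ?_ (le_add_self.trans le_self_add)
    rw [Set.indicator_of_mem (by exact hu), neg_add, Real.rpow_add hup]
    refine ENNReal.ofReal_le_ofReal (mul_le_mul_of_nonneg_left ?_ (by positivity))
    exact Real.rpow_le_rpow_of_nonpos hup h (by linarith)
  · refine le_trans ?_ le_add_self
    rw [Set.indicator_of_mem (by exact hv), neg_add, Real.rpow_add hvp]
    refine ENNReal.ofReal_le_ofReal (mul_le_mul_of_nonneg_right ?_ (by positivity))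
    exact Real.rpow_le_rpow_of_nonpos hvp h (by linarith)

/-- Singular kernel convolution estimate: for `α, γ ∈ (0,4)` with `α + γ > 4` there is
`C > 0` (depending only on `α, γ`) such that for all `z ≠ z̄` in `ℝ × ℝ²`,
`∫ ‖z − w‖_𝔰^{−α} ‖z̄ − w‖_𝔰^{−γ} dw ≤ C ‖z − z̄‖_𝔰^{4 − α − γ}`. -/
theorem parabolic_convolution_estimate (α γ : ℝ)
    (hα : α ∈ Set.Ioo (0 : ℝ) 4) (hγ : γ ∈ Set.Ioo (0 : ℝ) 4) (hsum : 4 < α + γ) :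
    ∃ C : ℝ, 0 < C ∧ ∀ z zb : ℝ × EuclideanSpace ℝ (Fin 2), z ≠ zb →
      (∫ w : ℝ × EuclideanSpace ℝ (Fin 2),
          parabolicNorm (z - w) ^ (-α) * parabolicNorm (zb - w) ^ (-γ))
        ≤ C * parabolicNorm (z - zb) ^ (4 - α - γ) := by
  obtain ⟨hα0, hα4⟩ := hα
  obtain ⟨hγ0, hγ4⟩ := hγ
  have hA : 0 < dyadicConst α (1 / 2) := dyadicConst_pos
    (Real.rpow_lt_one (by norm_num) (by norm_num) (by linarith))
  have hG : 0 < dyadicConst γ (1 / 2) := dyadicConst_pos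
    (Real.rpow_lt_one (by norm_num) (by norm_num) (by linarith))
  have hB : 0 < dyadicConst (α + γ) 2 := dyadicConst_pos
    (Real.rpow_lt_one_of_one_lt_of_neg (by norm_num) (by linarith))
  refine ⟨(dyadicConst α (1 / 2) + dyadicConst γ (1 / 2)) * (1 / 2) ^ (4 - α - γ)
    + 2 * dyadicConst (α + γ) 2, by positivity, fun z zb hz => ?_⟩
  have hr : 0 < parabolicNorm (z - zb) := parabolicNorm_pos (sub_ne_zero.2 hz)
  have htri := parabolicNorm_sub_le z zb
  set r := parabolicNorm (z - zb)
  have hN := measurable_parabolicNorm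
  rw [integral_eq_lintegral_of_nonneg_ae]
  rotate_left
  · exact Filter.Eventually.of_forall fun w => mul_nonneg
      (Real.rpow_nonneg (parabolicNorm_nonneg _) _) (Real.rpow_nonneg (parabolicNorm_nonneg _) _)
  · exact (((hN.comp (measurable_const.sub measurable_id)).pow_const _).mul
      ((hN.comp (measurable_const.sub measurable_id)).pow_const _)).aestronglyMeasurable
  refine ENNReal.toReal_le_of_le_ofReal (by positivity) ?_
  have hs : ∀ y : ℝ × EuclideanSpace ℝ (Fin 2), Measurable fun w => y - w := fun y =>
    measurable_const.sub measurable_id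
  have hIn : ∀ (β : ℝ) (y : ℝ × EuclideanSpace ℝ (Fin 2)),
      Measurable fun w => {w | parabolicNorm w ≤ r / 2}.indicator
        (fun w => ENNReal.ofReal (parabolicNorm w ^ (-β))) (y - w) := fun β y =>
    ((hN.pow_const _).ennreal_ofReal.indicator (measurableSet_le hN measurable_const)).comp (hs y)
  have hOut : ∀ (β : ℝ) (y : ℝ × EuclideanSpace ℝ (Fin 2)),
      Measurable fun w => {w | r / 2 < parabolicNorm w}.indicator
        (fun w => ENNReal.ofReal (parabolicNorm w ^ (-β))) (y - w) := fun β y =>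
    ((hN.pow_const _).ennreal_ofReal.indicator (measurableSet_lt measurable_const hN)).comp (hs y)
  refine (lintegral_mono fun w => ofReal_mul_rpow_le hα0 hγ0 hr (z - w) (zb - w) (htri w)).trans ?_
  rw [lintegral_add_right _ (hOut _ zb), lintegral_add_right _ (hOut _ z),
    lintegral_add_right _ ((hIn _ zb).const_mul _),
    lintegral_const_mul _ (hIn _ z), lintegral_const_mul _ (hIn _ zb)]
  have : (volume : Measure (ℝ × EuclideanSpace ℝ (Fin 2))).IsAddHaarMeasure :=
    inferInstanceAs (Measure.prod volume volume).IsAddHaarMeasure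
  have hshift : ∀ (f : ℝ × EuclideanSpace ℝ (Fin 2) → ENNReal) (y : ℝ × EuclideanSpace ℝ (Fin 2)),
      ∫⁻ w, f (y - w) = ∫⁻ w, f w := fun f y => lintegral_sub_left_eq_self f y
  rw [hshift _ z, hshift _ zb, hshift _ z, hshift _ zb]
  have hr2 : 0 < r / 2 := by positivity
  refine (add_le_add (add_le_add (add_le_add
    (mul_le_mul_right (lintegral_inner_le hα0 hα4 hr2) _)
    (mul_le_mul_right (lintegral_inner_le hγ0 hγ4 hr2) _))
    (lintegral_outer_le hsum hr2)) (lintegral_outer_le hsum hr2)).trans ?_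
  rw [← ENNReal.ofReal_mul (by positivity), ← ENNReal.ofReal_mul (by positivity),
    ← ENNReal.ofReal_add (by positivity) (by positivity),
    ← ENNReal.ofReal_add (by positivity) (by positivity),
    ← ENNReal.ofReal_add (by positivity) (by positivity)]
  refine (congrArg ENNReal.ofReal ?_).le
  have e1 : (r / 2) ^ (-γ) * (r / 2) ^ (4 - α) = r ^ (4 - α - γ) * (1 / 2) ^ (4 - α - γ) := by
    rw [← Real.rpow_add hr2, ← Real.mul_rpow hr.le (by norm_num)]; congr 1 <;> ring
  have e2 : (r / 2) ^ (-α) * (r / 2) ^ (4 - γ) = r ^ (4 - α - γ) * (1 / 2) ^ (4 - α - γ) := by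
    rw [← Real.rpow_add hr2, ← Real.mul_rpow hr.le (by norm_num)]; congr 1 <;> ring
  have e3 : (2 * (r / 2)) ^ (4 - (α + γ)) = r ^ (4 - α - γ) := by congr 1 <;> ring
  rw [e3]
  linear_combination dyadicConst α (1 / 2) * e1 + dyadicConst γ (1 / 2) * e2
end
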